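/- arXiv:2210.13100 — 2 statements merged into one kernel-verified Lean document; each statement's English description precedes it below -/
import Mathlib

section
/- Let 0 < w < 1 and 1/2 < θ < 1, and let (x,y,z,t) be non-negative integers with x+y+z+t = n. Then w·[θ^{x+2y+t}(1−θ)^{x+2z+t} + θ^{x+2z+t}(1−θ)^{x+2y+t}] < 2(1−w)·θ^{2x+y+z}(1−θ)^{y+z+2t} if and only if (θ/(1−θ))^{(y−z)−(x−t)} + (θ/(1−θ))^{(z−y)−(x−t)} < 2(1−w)/w. Consequently, a table (x,y,z,t) is good if and only if moving it together with its transposed table (x,z,y,t) from the null set to the positive set of a rule strictly decreases the loss L_w. -/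
def tsum4 (T : ℕ × ℕ × ℕ × ℕ) : ℕ := T.1 + T.2.1 + T.2.2.1 + T.2.2.2

/-- The finite set of all voting tables of a committee of size `n`. -/
def tables (n : ℕ) : Finset (ℕ × ℕ × ℕ × ℕ) :=
  ((Finset.range (n+1)) ×ˢ (Finset.range (n+1)) ×ˢ (Finset.range (n+1)) ×ˢ
    (Finset.range (n+1))).filter (fun T => tsum4 T = n)

/-- Multinomial coefficient `n!/(x! y! z! t!)` as a real number. -/
noncomputable def mcoef (n : ℕ) (T : ℕ × ℕ × ℕ × ℕ) : ℝ :=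
  (n.factorial : ℝ) /
    (T.1.factorial * T.2.1.factorial * T.2.2.1.factorial * T.2.2.2.factorial)

/-- The loss `L_w(r) = w·ℙ_r(FP) + (1−w)·ℙ_r(FN)`. -/
noncomputable def loss (n : ℕ) (w θ : ℝ) (r : ℕ × ℕ × ℕ × ℕ → Fin 2) : ℝ :=
  w * ∑ T ∈ (tables n).filter (fun T => r T = 1),
        mcoef n T * θ ^ (T.1 + 2*T.2.1 + T.2.2.2) * (1-θ) ^ (T.1 + 2*T.2.2.1 + T.2.2.2)
  + (1-w) * ∑ T ∈ (tables n).filter (fun T => r T = 0),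
        mcoef n T * θ ^ (2*T.1 + T.2.1 + T.2.2.1) * (1-θ) ^ (T.2.1 + T.2.2.1 + 2*T.2.2.2)

/-- A table `(x,y,z,t)` is good (for competence `θ` and weight `w`) if
`(θ/(1−θ))^{(y−z)−(x−t)} + (θ/(1−θ))^{(z−y)−(x−t)} < 2(1−w)/w`. -/
def goodTable (θ w : ℝ) (T : ℕ × ℕ × ℕ × ℕ) : Prop :=
  (θ/(1-θ)) ^ (((T.2.1 : ℤ) - T.2.2.1) - ((T.1 : ℤ) - T.2.2.2))
    + (θ/(1-θ)) ^ (((T.2.2.1 : ℤ) - T.2.1) - ((T.1 : ℤ) - T.2.2.2)) < 2*(1-w)/w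

theorem gt_ratio (θ : ℝ) (h0 : 0 < θ) (h1 : 0 < 1 - θ) (x y z t : ℕ) :
    θ ^ (x + 2*y + t) * (1-θ) ^ (x + 2*z + t) =
      (θ/(1-θ)) ^ (((y : ℤ) - z) - ((x : ℤ) - t)) *
        (θ ^ (2*x + y + z) * (1-θ) ^ (y + z + 2*t)) := by
  have e1 : θ ^ (x + 2*y + t) =
      θ ^ (((y : ℤ) - z) - ((x : ℤ) - t)) * θ ^ (2*x + y + z) := by
    rw [← zpow_natCast, ← zpow_natCast, ← zpow_add₀ h0.ne']
    congr 1; push_cast; ring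
  have e2 : (1-θ) ^ (y + z + 2*t) =
      (1-θ) ^ (((y : ℤ) - z) - ((x : ℤ) - t)) * (1-θ) ^ (x + 2*z + t) := by
    rw [← zpow_natCast, ← zpow_natCast, ← zpow_add₀ h1.ne']
    congr 1; push_cast; ring
  have h3 : (1-θ) ^ (((y : ℤ) - z) - ((x : ℤ) - t)) ≠ 0 := zpow_ne_zero _ h1.ne'
  rw [e1, e2, div_zpow]
  field_simp

/-- The loss as a single sum over all tables. -/
theorem gt_loss_eq (n : ℕ) (w θ : ℝ) (r : ℕ × ℕ × ℕ × ℕ → Fin 2) :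
    loss n w θ r = ∑ T ∈ tables n, if r T = 1 then
      w * (mcoef n T * θ ^ (T.1 + 2*T.2.1 + T.2.2.2) * (1-θ) ^ (T.1 + 2*T.2.2.1 + T.2.2.2))
      else (1-w) * (mcoef n T * θ ^ (2*T.1 + T.2.1 + T.2.2.1)
        * (1-θ) ^ (T.2.1 + T.2.2.1 + 2*T.2.2.2)) := by
  unfold loss
  rw [Finset.mul_sum, Finset.mul_sum, Finset.sum_filter, Finset.sum_filter,
    ← Finset.sum_add_distrib]
  refine Finset.sum_congr rfl fun T _ => ?_
  have h : r T = 0 ∨ r T = 1 := by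
    generalize r T = a
    revert a; decide
  rcases h with h | h <;> simp [h]

theorem gt_mem (n x y z t : ℕ) (h : x + y + z + t = n) : (x, y, z, t) ∈ tables n := by
  unfold tables
  refine Finset.mem_filter.mpr ⟨?_, h⟩
  simp only [Finset.mem_product, Finset.mem_range]
  omega

/-- Characterisation of good tables: the weighted loss change is negative iff the
inequality `(θ/(1−θ))^{(y−z)−(x−t)} + (θ/(1−θ))^{(z−y)−(x−t)} < 2(1−w)/w` holds;
consequently a table is good iff moving it together with its transposed table from
the null set to the positive set of a rule strictly decreases the loss `L_w`. -/
theorem goodTable_characterisation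
    (n m : ℕ) (hm : 1 ≤ m) (hn : n = 2 * m + 1)
    (w : ℝ) (hw0 : 0 < w) (hw1 : w < 1)
    (θ : ℝ) (hθ : 1/2 < θ) (hθ1 : θ < 1)
    (x y z t : ℕ) (hsum : x + y + z + t = n) :
    (w * (θ ^ (x + 2*y + t) * (1-θ) ^ (x + 2*z + t)
          + θ ^ (x + 2*z + t) * (1-θ) ^ (x + 2*y + t)) <
        2 * (1-w) * (θ ^ (2*x + y + z) * (1-θ) ^ (y + z + 2*t))
      ↔ (θ/(1-θ)) ^ (((y : ℤ) - z) - ((x : ℤ) - t))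
          + (θ/(1-θ)) ^ (((z : ℤ) - y) - ((x : ℤ) - t)) < 2*(1-w)/w) ∧
    (∀ r : ℕ × ℕ × ℕ × ℕ → Fin 2,
      r (x, y, z, t) = 0 → r (x, z, y, t) = 0 →
      (loss n w θ (fun S => if S = (x, y, z, t) ∨ S = (x, z, y, t) then 1 else r S)
          < loss n w θ r
        ↔ goodTable θ w (x, y, z, t))) := by
  have h0 : 0 < θ := by linarith
  have h1 : 0 < 1 - θ := by linarith
  have hB : 0 < θ ^ (2*x + y + z) * (1-θ) ^ (y + z + 2*t) := by positivity
  have key : (w * (θ ^ (x + 2*y + t) * (1-θ) ^ (x + 2*z + t)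
          + θ ^ (x + 2*z + t) * (1-θ) ^ (x + 2*y + t)) <
        2 * (1-w) * (θ ^ (2*x + y + z) * (1-θ) ^ (y + z + 2*t))
      ↔ (θ/(1-θ)) ^ (((y : ℤ) - z) - ((x : ℤ) - t))
          + (θ/(1-θ)) ^ (((z : ℤ) - y) - ((x : ℤ) - t)) < 2*(1-w)/w) := by
    have e2 := gt_ratio θ h0 h1 x z y t
    rw [show 2*x + z + y = 2*x + y + z by ring, show z + y + 2*t = y + z + 2*t by ring] at e2
    rw [gt_ratio θ h0 h1 x y z t, e2, ← add_mul, ← mul_assoc, mul_lt_mul_iff_left₀ hB,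
      lt_div_iff₀ hw0, mul_comm w]
  refine ⟨key, fun r hr1 hr2 => ?_⟩
  refine Iff.trans ?_ key
  have hmem1 := gt_mem n x y z t hsum
  have hmem2 := gt_mem n x z y t (by omega)
  have hc : 0 < mcoef n (x, y, z, t) := by unfold mcoef; positivity
  have hc2 : mcoef n (x, z, y, t) = mcoef n (x, y, z, t) := by
    unfold mcoef; congr 1; ring
  have hsub : ({(x, y, z, t), (x, z, y, t)} : Finset (ℕ × ℕ × ℕ × ℕ)) ⊆ tables n := by
    intro S hS
    simp only [Finset.mem_insert, Finset.mem_singleton] at hS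
    rcases hS with rfl | rfl <;> assumption
  have hdiff : loss n w θ (fun S => if S = (x, y, z, t) ∨ S = (x, z, y, t) then 1 else r S)
      - loss n w θ r = ∑ T ∈ ({(x, y, z, t), (x, z, y, t)} : Finset (ℕ × ℕ × ℕ × ℕ)),
      (w * (mcoef n T * θ ^ (T.1 + 2*T.2.1 + T.2.2.2) * (1-θ) ^ (T.1 + 2*T.2.2.1 + T.2.2.2))
      - (1-w) * (mcoef n T * θ ^ (2*T.1 + T.2.1 + T.2.2.1)
        * (1-θ) ^ (T.2.1 + T.2.2.1 + 2*T.2.2.2))) := by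
    rw [gt_loss_eq, gt_loss_eq, ← Finset.sum_sub_distrib]
    symm
    rw [← Finset.sum_subset hsub]
    · refine Finset.sum_congr rfl fun T hT => ?_
      simp only [Finset.mem_insert, Finset.mem_singleton] at hT
      have hr : r T = 0 := by rcases hT with rfl | rfl <;> assumption
      simp [hT, hr]
    · intro T _ hT
      simp only [Finset.mem_insert, Finset.mem_singleton] at hT
      simp [hT]
  have hfin : ∃ k : ℝ, 0 < k ∧
      k * (loss n w θ (fun S => if S = (x, y, z, t) ∨ S = (x, z, y, t) then 1 else r S)
        - loss n w θ r) = mcoef n (x, y, z, t) *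
      (w * (θ ^ (x + 2*y + t) * (1-θ) ^ (x + 2*z + t)
          + θ ^ (x + 2*z + t) * (1-θ) ^ (x + 2*y + t)) -
        2 * (1-w) * (θ ^ (2*x + y + z) * (1-θ) ^ (y + z + 2*t))) := by
    rw [hdiff]
    by_cases hyz : y = z
    · subst hyz
      refine ⟨2, two_pos, ?_⟩
      simp only [Finset.pair_eq_singleton, Finset.sum_singleton]
      ring
    · have hne : ((x, y, z, t) : ℕ × ℕ × ℕ × ℕ) ≠ (x, z, y, t) := by
        simp [hyz]
      refine ⟨1, one_pos, ?_⟩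
      rw [Finset.sum_pair hne]
      simp only [hc2]
      rw [show 2*x + z + y = 2*x + y + z by ring, show z + y + 2*t = y + z + 2*t by ring]
      ring
  obtain ⟨k, hk, he⟩ := hfin
  rw [← sub_neg, ← sub_neg (a := w * _)]
  constructor
  · intro h
    by_contra hcon
    have h2 := mul_nonneg hc.le (not_lt.mp hcon)
    have h3 := mul_neg_of_pos_of_neg hk h
    linarith
  · intro h
    by_contra hcon
    have h2 := mul_nonneg hk.le (not_lt.mp hcon)
    have h3 := mul_neg_of_pos_of_neg hc h
    linarith
end

section
/- For every odd integer n ≥ 3, there exist two voting tables T = (x,y,z,t) and T' = (x',y',z',t') with x+y+z+t = x'+y'+z'+t' = n, x − t = x' − t', and |y − z| = |y' − z'|, such that x > y+z+t but x' ≤ y'+z'+t'. Consequently the conclusion-based rule r_cb, defined by r_cb(x,y,z,t) = 1 if and only if x > y+z+t, assigns different values to two tables in the same (ρ,α)-equivalence class, and hence is never equal to the optimal rule for any competence 1/2 < θ < 1 and weight 0 < w < 1. -/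
open Classical in
/-- The optimal rule: positive exactly on the good tables. -/
noncomputable def ruleStar (θ w : ℝ) : ℕ × ℕ × ℕ × ℕ → Fin 2 :=
  fun T => if goodTable θ w T then 1 else 0

/-- The conclusion-based rule: decide `C` iff `x > y+z+t`. -/
def ruleCB : ℕ × ℕ × ℕ × ℕ → Fin 2 := fun T =>
  if T.2.1 + T.2.2.1 + T.2.2.2 < T.1 then 1 else 0

/-- For every odd `n ≥ 3` there are two voting tables in the same
`(ρ,α)`-equivalence class (same `x−t` and same `|y−z|`) on which the
conclusion-based rule takes different values; hence, since the optimal rule is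
constant on each `(ρ,α)`-class, the conclusion-based rule is never equal to the
optimal rule, for any competence `1/2 < θ < 1` and weight `0 < w < 1`. -/
theorem conclusionBased_never_optimal (n : ℕ) (hodd : Odd n) (h3 : 3 ≤ n) :
    (∃ x y z t x' y' z' t' : ℕ,
      x + y + z + t = n ∧ x' + y' + z' + t' = n ∧
      (x : ℤ) - t = (x' : ℤ) - t' ∧ |(y : ℤ) - z| = |(y' : ℤ) - z'| ∧
      y + z + t < x ∧ x' ≤ y' + z' + t') ∧
    (∀ θ w : ℝ, 1/2 < θ → θ < 1 → 0 < w → w < 1 →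
      ∃ T : ℕ × ℕ × ℕ × ℕ, T.1 + T.2.1 + T.2.2.1 + T.2.2.2 = n ∧
        ruleCB T ≠ ruleStar θ w T) := by
  obtain ⟨k, rfl⟩ := hodd
  obtain ⟨m, rfl⟩ : ∃ m, k = m + 1 := ⟨k - 1, by omega⟩
  refine ⟨⟨m + 2, 0, 0, m + 1, m + 1, 1, 1, m, by omega, by omega, by push_cast; ring,
    by simp, by omega, by omega⟩, ?_⟩
  intro θ w _ _ _ _
  by_contra! hcon
  have h1 := hcon (m + 2, 0, 0, m + 1) (by simp only; omega)
  have h2 := hcon (m + 1, 1, 1, m) (by simp only; omega)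
  have hstar : ruleStar θ w (m + 2, 0, 0, m + 1) = ruleStar θ w (m + 1, 1, 1, m) := by
    have hg : goodTable θ w (m + 2, 0, 0, m + 1) ↔ goodTable θ w (m + 1, 1, 1, m) := by
      have e1 : ((m + 2 : ℕ) : ℤ) - ((m + 1 : ℕ) : ℤ) = 1 := by push_cast; ring
      have e2 : ((m + 1 : ℕ) : ℤ) - (m : ℤ) = 1 := by push_cast; ring
      simp only [goodTable, e1, e2, sub_self]
    unfold ruleStar
    by_cases h : goodTable θ w (m + 1, 1, 1, m)
    · rw [if_pos h, if_pos (hg.mpr h)]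
    · rw [if_neg h, if_neg (fun h' => h (hg.mp h'))]
  have c1 : ruleCB (m + 2, 0, 0, m + 1) = 1 := by
    simp only [ruleCB]
    exact if_pos (by omega)
  have c2 : ruleCB (m + 1, 1, 1, m) = 0 := by
    simp only [ruleCB]
    exact if_neg (by omega)
  rw [c1, hstar, ← h2, c2] at h1
  exact absurd h1 (by decide)
end
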